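/- Let n ≥ 1, s ∈ (0,1), and let θ : ℝⁿ → ℝ be a nonnegative Schwartz function. Then ∫_{ℝⁿ} θ(x)² · (∫_{ℝⁿ} (θ(x) − θ(x+y)) / |y|^{n+s} dy) dx ≥ 0. -/

import Mathlib

open MeasureTheory

/-- Integrability of the truncated kernel. -/
lemma kernel_integrable (n : ℕ) (hn : 1 ≤ n) (s : ℝ) (hs : s ∈ Set.Ioo (0 : ℝ) 1) :
    Integrable (fun y : EuclideanSpace ℝ (Fin n) => min ‖y‖ 1 / ‖y‖ ^ ((n : ℝ) + s)) := by
  obtain ⟨hs0, hs1⟩ := hs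
  haveI : Nonempty (Fin n) := ⟨⟨0, hn⟩⟩
  have key := integrable_fun_norm_addHaar (volume : Measure (EuclideanSpace ℝ (Fin n)))
    (f := fun r : ℝ => min r 1 / r ^ ((n : ℝ) + s))
  refine key.2 ?_
  have hpow : ∀ r : ℝ, 0 < r →
      r ^ (n - 1) * (1 / r ^ ((n : ℝ) + s)) = r ^ (-1 - s) := by
    intro r hr
    have h1 : r ^ (n - 1) = r ^ ((n : ℝ) - 1) := by
      rw [← Real.rpow_natCast, Nat.cast_sub hn, Nat.cast_one]
    rw [h1, one_div, ← Real.rpow_neg hr.le, ← Real.rpow_add hr]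
    congr 1; ring
  rw [← Set.Ioc_union_Ioi_eq_Ioi (zero_le_one (α := ℝ))]
  refine IntegrableOn.union ?_ ?_
  · have h := (intervalIntegral.intervalIntegrable_rpow' (a := 0) (b := 1) (r := -s)
      (by linarith))
    rw [intervalIntegrable_iff_integrableOn_Ioc_of_le zero_le_one] at h
    refine h.congr_fun ?_ measurableSet_Ioc
    intro r hr
    have h2 := hpow r hr.1
    have h3 : r ^ (-s) = r * r ^ (-1 - s) := by
      rw [show -s = 1 + (-1 - s) by ring, Real.rpow_add hr.1, Real.rpow_one]
    simp only [finrank_euclideanSpace, Fintype.card_fin, smul_eq_mul, min_eq_left hr.2]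
    rw [h3, ← h2]; ring
  · have h := integrableOn_Ioi_rpow_of_lt (a := -1 - s) (c := 1) (by linarith) one_pos
    refine h.congr_fun ?_ measurableSet_Ioi
    intro r hr
    have hr' : (1 : ℝ) < r := hr
    have h2 := hpow r (by linarith)
    simp only [finrank_euclideanSpace, Fintype.card_fin, smul_eq_mul, min_eq_right hr'.le]
    rw [← h2]

lemma schwartz_diff_bound {n : ℕ} (θ : SchwartzMap (EuclideanSpace ℝ (Fin n)) ℝ) :
    ∃ C : ℝ, 0 ≤ C ∧ (∀ x, |θ x| ≤ C) ∧ ∀ x y, |θ x - θ (x + y)| ≤ C * min ‖y‖ 1 := by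
  obtain ⟨M, hM⟩ : ∃ M, ∀ x, ‖θ x‖ ≤ M := ⟨_, SchwartzMap.norm_le_seminorm ℝ θ⟩
  obtain ⟨L, hL⟩ : ∃ L, ∀ x, ‖fderiv ℝ θ x‖ ≤ L :=
    ⟨_, fun x => SchwartzMap.norm_le_seminorm ℝ (SchwartzMap.fderivCLM ℝ _ _ θ) x⟩
  have hM0 : 0 ≤ M := (norm_nonneg _).trans (hM 0)
  have hL0 : 0 ≤ L := (norm_nonneg _).trans (hL 0)
  refine ⟨L + 2 * M, by positivity, fun x => ?_, fun x y => ?_⟩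
  · have := hM x
    rw [Real.norm_eq_abs] at this
    linarith
  have h1 : |θ x - θ (x + y)| ≤ L * ‖y‖ := by
    have := Convex.norm_image_sub_le_of_norm_fderiv_le (𝕜 := ℝ) (f := θ) (s := Set.univ)
      (x := x + y) (y := x) (fun z _ => θ.differentiableAt) (fun z _ => hL z) convex_univ
      trivial trivial
    simpa using this
  have h2 : |θ x - θ (x + y)| ≤ 2 * M := by
    have a := hM x
    have b := hM (x + y)
    have := norm_sub_le (θ x) (θ (x + y))
    rw [Real.norm_eq_abs (θ x - θ (x + y))] at this
    linarith
  rcases min_cases ‖y‖ 1 with ⟨h, _⟩ | ⟨h, _⟩ <;> rw [h]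
  · nlinarith [norm_nonneg y]
  · linarith

/-- The sign fact `∫ θ² Λ^s θ dx ≥ 0` for nonnegative Schwartz `θ` (fractional Laplacian written
without its normalization constant). -/
theorem integral_sq_mul_fractionalLaplacian_nonneg (n : ℕ) (hn : 1 ≤ n) (s : ℝ)
    (hs : s ∈ Set.Ioo (0 : ℝ) 1)
    (θ : SchwartzMap (EuclideanSpace ℝ (Fin n)) ℝ) (hθ : ∀ x, 0 ≤ θ x) :
    0 ≤ ∫ x : EuclideanSpace ℝ (Fin n),
        (θ x) ^ 2 * ∫ y : EuclideanSpace ℝ (Fin n),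
          (θ x - θ (x + y)) / ‖y‖ ^ ((n : ℝ) + s) := by
  obtain ⟨C, hC0, hC1, hC⟩ := schwartz_diff_bound θ
  have hk := kernel_integrable n hn s hs
  have hcont : Continuous θ := θ.continuous
  have hsq : Integrable (fun x => (θ x) ^ 2) := (θ.memLp 2).integrable_sq
  have hcube : Integrable (fun x => (θ x) ^ 3) := by
    refine (hsq.const_mul C).mono' (by fun_prop) (Filter.Eventually.of_forall fun x => ?_)
    rw [Real.norm_eq_abs, abs_of_nonneg (pow_nonneg (hθ x) 3)]
    have := (le_abs_self _).trans (hC1 x)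
    nlinarith [sq_nonneg (θ x)]
  simp_rw [← integral_const_mul]
  rw [integral_integral_swap]
  · refine integral_nonneg fun y => ?_
    have hH : Integrable (fun x => (θ x) ^ 2 * (θ x - θ (x + y))) := by
      refine (hsq.const_mul C).mono' (Continuous.aestronglyMeasurable (by fun_prop))
        (Filter.Eventually.of_forall fun x => ?_)
      rw [norm_mul, Real.norm_eq_abs, Real.norm_eq_abs, abs_of_nonneg (sq_nonneg _), mul_comm]
      refine mul_le_mul_of_nonneg_right ((hC x y).trans ?_) (sq_nonneg _)
      nlinarith [min_le_right ‖y‖ 1]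
    have h0 : 0 ≤ ∫ x, (θ x) ^ 2 * (θ x - θ (x + y)) := by
      have hz : ∫ x, ((θ x) ^ 3 - (θ (x + y)) ^ 3) / 3 = 0 := by
        rw [integral_div, integral_sub hcube (hcube.comp_add_right y),
          integral_add_right_eq_self (fun x => (θ x) ^ 3) y]
        simp
      rw [← hz]
      refine integral_mono ((hcube.sub (hcube.comp_add_right y)).div_const 3) hH fun x => ?_
      have ha := hθ x
      have hb := hθ (x + y)
      simp only
      nlinarith [mul_nonneg ha (sq_nonneg (θ x - θ (x + y))),
        mul_nonneg hb (sq_nonneg (θ x - θ (x + y)))]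
    have : ∫ x, (θ x) ^ 2 * ((θ x - θ (x + y)) / ‖y‖ ^ ((n : ℝ) + s))
        = (∫ x, (θ x) ^ 2 * (θ x - θ (x + y))) / ‖y‖ ^ ((n : ℝ) + s) := by
      rw [← integral_div]
      congr 1; ext x; ring
    simp only [Pi.zero_apply]
    rw [this]
    positivity
  · refine (hsq.mul_prod (hk.const_mul C)).mono' ?_ (Filter.Eventually.of_forall fun p => ?_)
    · refine Measurable.aestronglyMeasurable ?_
      have h1 : Measurable θ := hcont.measurable
      unfold Function.uncurry
      fun_prop
    · obtain ⟨x, y⟩ := p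
      simp only [Function.uncurry]
      have hr : 0 ≤ ‖y‖ ^ ((n : ℝ) + s) := by positivity
      rw [norm_mul, norm_div, Real.norm_eq_abs, Real.norm_eq_abs, Real.norm_eq_abs,
        abs_of_nonneg (sq_nonneg _), abs_of_nonneg hr, ← mul_div_assoc C]
      exact mul_le_mul_of_nonneg_left (div_le_div_of_nonneg_right (hC x y) hr) (sq_nonneg _)
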